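/- For every α ≥ 1 and every superlinear function g : ℕ → ℕ, the class C_g is neither adaptively additively α-robustly learnable nor adaptively subtractively α-robustly learnable. -/

import Mathlib

open scoped ENNReal NNReal

/-- Total variation distance between two discrete distributions. -/
noncomputable def tv {X : Type*} (p q : PMF X) : ℝ :=
  (∑' x, |(p x).toReal - (q x).toReal|) / 2

/-- The distribution of an i.i.d. sample of size `m` from `p`, viewed as a multiset. -/
noncomputable def iid {X : Type*} (p : PMF X) : ℕ → PMF (Multiset X)
  | 0 => PMF.pure 0
  | n + 1 => (iid p n).bind fun s => p.map fun x => x ::ₘ s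

/-- `|Q|^m` : first draw `q ∼ Q`, then an i.i.d. sample `S ∼ q^m`. -/
noncomputable def metaSample {X : Type*} (Q : PMF (PMF X)) (m : ℕ) : PMF (Multiset X) :=
  Q.bind fun q => iid q m

/-- An adaptive adversary: a randomized map from samples (finite multisets) to samples. -/
abbrev Adversary (X : Type*) := Multiset X → PMF (Multiset X)

/-- `V(P)`: the distribution of `V S` for `S ∼ P` (including internal randomness). -/
noncomputable def advPush {X : Type*} (V : Adversary X) (P : PMF (Multiset X)) :
    PMF (Multiset X) := P.bind V

/-- An additive adversary only adds points: `S ⊆ V(S)` almost surely. -/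
def IsAdditive {X : Type*} (V : Adversary X) : Prop :=
  ∀ S T, T ∈ (V S).support → S ≤ T

/-- A subtractive adversary only removes points: `V(S) ⊆ S` almost surely. -/
def IsSubtractive {X : Type*} (V : Adversary X) : Prop :=
  ∀ S T, T ∈ (V S).support → T ≤ S

/-- Fixed constant budget `η`: `|V(S)|` depends only on `|S|` (via `c`), and for every `m`,
`η m − 1 < m·budget(V,m) ≤ η m` where `m·budget(V,m) = ||V(S)| − |S||`. -/
def FixedBudget {X : Type*} (V : Adversary X) (η : ℝ) : Prop :=
  ∃ c : ℕ → ℕ, (∀ S T, T ∈ (V S).support → Multiset.card T = c (Multiset.card S)) ∧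
    ∀ m : ℕ, η * m - 1 < |(c m : ℝ) - m| ∧ |(c m : ℝ) - m| ≤ η * m

/-- Fixed constant budget `η` for an additive adversary (`m·budget(V,m) = |V(S)| − |S|`). -/
def FixedBudgetAdd {X : Type*} (V : Adversary X) (η : ℝ) : Prop :=
  ∃ c : ℕ → ℕ, (∀ S T, T ∈ (V S).support → Multiset.card T = c (Multiset.card S)) ∧
    ∀ m : ℕ, η * m - 1 < (c m : ℝ) - m ∧ (c m : ℝ) - m ≤ η * m

/-- Fixed constant budget `η` for a subtractive adversary (`m·budget(V,m) = |S| − |V(S)|`). -/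
def FixedBudgetSub {X : Type*} (V : Adversary X) (η : ℝ) : Prop :=
  ∃ c : ℕ → ℕ, (∀ S T, T ∈ (V S).support → Multiset.card T = c (Multiset.card S)) ∧
    ∀ m : ℕ, η * m - 1 < (m : ℝ) - c m ∧ (m : ℝ) - c m ≤ η * m

/-- Probability of an event under a discrete distribution. -/
noncomputable def probEvent {β : Type*} (P : PMF β) (E : Set β) : ℝ≥0∞ :=
  P.toOuterMeasure E

/-- `A` with sample complexity `mc` learns the class `C` against adversary `V`,
up to error `bound + ε` with confidence `1 − δ` once `m ≥ mc ε δ`. -/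
def RobustLearnerFor {X : Type*} (C : Set (PMF X)) (A : Multiset X → PMF X)
    (mc : ℝ → ℝ → ℕ) (V : Adversary X) (bound : ℝ) : Prop :=
  ∀ p ∈ C, ∀ ε δ : ℝ, 0 < ε → ε < 1 → 0 < δ → δ < 1 →
    ∀ m : ℕ, mc ε δ ≤ m →
      1 - ENNReal.ofReal δ ≤
        probEvent ((iid p m).bind V) {T | tv (A T) p ≤ bound + ε}

/-- `C` is adaptively α-robustly learnable w.r.t. the single adversary `V` with budget `η`. -/
def RobustlyLearnableWrt {X : Type*} (C : Set (PMF X)) (α : ℝ)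
    (V : Adversary X) (η : ℝ) : Prop :=
  ∃ A mc, RobustLearnerFor C A mc V (α * η)

/-- `V` (with budget `η`) is a universal α-adversary for `C`. -/
def UniversalAdversary {X : Type*} (C : Set (PMF X)) (α : ℝ)
    (V : Adversary X) (η : ℝ) : Prop :=
  ¬ RobustlyLearnableWrt C α V η

/-- `C` is adaptively α-robustly learnable w.r.t. a class `𝒱` of adversaries
(each given with its budget). -/
def RobustlyLearnableWrtClass {X : Type*} (C : Set (PMF X)) (α : ℝ)
    (𝒱 : Set (Adversary X × ℝ)) : Prop :=
  ∃ A mc, ∀ Vη ∈ 𝒱, RobustLearnerFor C A mc Vη.1 (α * Vη.2)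

/-- `C` is adaptively additively α-robustly learnable: one learner works simultaneously
against all additive adaptive adversaries with fixed constant budgets. -/
def AdditivelyRobustlyLearnable {X : Type*} (C : Set (PMF X)) (α : ℝ) : Prop :=
  ∃ A mc, ∀ V : Adversary X, ∀ η : ℝ, 0 < η → η < 1 →
    IsAdditive V → FixedBudgetAdd V η → RobustLearnerFor C A mc V (α * η)

/-- `C` is adaptively subtractively α-robustly learnable. -/
def SubtractivelyRobustlyLearnable {X : Type*} (C : Set (PMF X)) (α : ℝ) : Prop :=
  ∃ A mc, ∀ V : Adversary X, ∀ η : ℝ, 0 < η → η < 1 →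
    IsSubtractive V → FixedBudgetSub V η → RobustLearnerFor C A mc V (α * η)

/-- The pair `(V1, V2)` successfully `(γ,ζ)`-confuses `C`-generated samples of size `m`. -/
def ConfusesPair {X : Type*} (C : Set (PMF X)) (V1 V2 : Adversary X)
    (γ ζ : ℝ) (m : ℕ) : Prop :=
  ∃ p ∈ C, ∃ Q : PMF (PMF X), Q.support ⊆ C ∧
    (∀ q ∈ Q.support, γ < tv p q) ∧
    tv (advPush V1 (metaSample Q m)) (advPush V2 (iid p m)) < ζ

/-- A single adversary `V` successfully `(γ,ζ)`-confuses `C`-generated samples of size `m`. -/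
def Confuses {X : Type*} (C : Set (PMF X)) (V : Adversary X) (γ ζ : ℝ) (m : ℕ) : Prop :=
  ConfusesPair C V V γ ζ m

/-- `p` is the distribution `p_{i,j,k} = (1 − 1/j)·δ_{(0,0)} + (1/j − 1/k)·U_{B_i×{2j+1}}
 + (1/k)·δ_{(i,2j+2)}` on `ℕ × ℕ`. -/
def IsPijk (B : ℕ → Finset ℕ) (i j k : ℕ) (p : PMF (ℕ × ℕ)) : Prop :=
  ∀ x : ℕ × ℕ,
    p x = (1 - ((j : ℝ≥0∞))⁻¹) * (if x = (0, 0) then 1 else 0)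
      + (((j : ℝ≥0∞))⁻¹ - ((k : ℝ≥0∞))⁻¹) *
          (if x.1 ∈ B i ∧ x.2 = 2 * j + 1 then (((B i).card : ℝ≥0∞))⁻¹ else 0)
      + ((k : ℝ≥0∞))⁻¹ * (if x = (i, 2 * j + 2) then 1 else 0)

/-- The class `C_g = {p_{i,j,g(j)} : i, j ∈ ℕ}` (for the meaningful parameters). -/
def Cg (B : ℕ → Finset ℕ) (g : ℕ → ℕ) : Set (PMF (ℕ × ℕ)) :=
  {p | ∃ i j : ℕ, 1 ≤ j ∧ j < g j ∧ (B i).Nonempty ∧ IsPijk B i j (g j) p}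

/-- `g` is superlinear: `g(n)/n → ∞`. -/
def Superlinear (g : ℕ → ℕ) : Prop :=
  Filter.Tendsto (fun n => (g n : ℝ) / n) Filter.atTop Filter.atTop

/-!
Fix `j`, put `k = g j`, and for bits `σ : Fin N → Bool` let `i σ` be the index of the set
`{2a + σ a : a < N}`, so that `p_{i σ, j, k}` is the image of one distribution on *symbolic* draws
(origin, index, or the `a`-th point) under a labelling depending on `σ`. If `N ≥ 2m`, a sample of
`m` symbolic draws leaves at least half of the bits unseen, and flipping all of them moves the
distribution by at least `(1/j - 1/k)/4` in total variation. Only the index draws tell `σ` from the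
flipped `σ'`. By Markov's inequality there are at most `4m/k` of them with probability at least
`3/4`, and then a budget `η = 4/k` suffices either to delete them all, or to add for every
`(i σ, 2j+2)` the decoy `(i σ', 2j+2)`; both adversaries produce identical outputs under `σ` and
`σ'`. A learner accurate to `r = 4α/k + 1/k` would need `2r ≥ (1/j - 1/k)/4` to be right on both,
which fails once `k > (32α + 9)j`. As `σ ↦ σ'` is an involution for each symbolic sample, averaging
over `σ` shows that some `σ` is learned with probability at most `5/8`.
-/

section Distributions

variable {X Y Ω ι : Type*}

lemma probEvent_eq_tsum (p : PMF X) (E : Set X) : probEvent p E = ∑' x, E.indicator p x :=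
  p.toOuterMeasure_apply E

lemma probEvent_map (p : PMF X) (f : X → Y) (E : Set Y) :
    probEvent (p.map f) E = probEvent p (f ⁻¹' E) :=
  p.toOuterMeasure_map_apply f E

lemma tsum_bind_mul (p : PMF X) (f : X → PMF Y) (φ : Y → ℝ≥0∞) :
    ∑' y, (p.bind f) y * φ y = ∑' x, p x * ∑' y, f x y * φ y := by
  simp only [PMF.bind_apply, ← ENNReal.tsum_mul_right, ← ENNReal.tsum_mul_left, mul_assoc]
  exact ENNReal.tsum_comm

lemma tsum_pure_mul (x : X) (φ : X → ℝ≥0∞) : ∑' y, PMF.pure x y * φ y = φ x := by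
  rw [tsum_eq_single x (fun y hy => by simp [hy])]
  simp

lemma tsum_map_mul (p : PMF X) (f : X → Y) (φ : Y → ℝ≥0∞) :
    ∑' y, (p.map f) y * φ y = ∑' x, p x * φ (f x) := by
  simp only [PMF.map, tsum_bind_mul, Function.comp_apply, tsum_pure_mul]

lemma iid_map (p : PMF X) (f : X → Y) (m : ℕ) :
    iid (p.map f) m = (iid p m).map (Multiset.map f) := by
  induction m with
  | zero => simp [iid, PMF.pure_map]
  | succ n ih =>
    simp only [iid, ih, PMF.map_bind, PMF.bind_map, PMF.map_comp, Function.comp_def,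
      Multiset.map_cons]

lemma card_eq_of_mem_support_iid {p : PMF X} {m : ℕ} {w : Multiset X}
    (hw : w ∈ (iid p m).support) : Multiset.card w = m := by
  induction m generalizing w with
  | zero => simpa [iid] using hw
  | succ n ih =>
    simp only [iid, PMF.mem_support_bind_iff, PMF.mem_support_map_iff] at hw
    obtain ⟨s, hs, x, -, rfl⟩ := hw
    rw [Multiset.card_cons, ih hs]

lemma tsum_iid_mul_count [DecidableEq X] (p : PMF X) (a : X) (m : ℕ) :
    ∑' w, iid p m w * (w.count a : ℝ≥0∞) = m * p a := by
  have count_cons_mean (s : Multiset X) :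
      ∑' x, p x * ((x ::ₘ s).count a : ℝ≥0∞) = s.count a + p a := by
    simp [Multiset.count_cons, mul_add, ENNReal.tsum_add, ENNReal.tsum_mul_right, p.tsum_coe]
  induction m with
  | zero => simp [iid]
  | succ n ih =>
    simp only [iid, tsum_bind_mul, tsum_map_mul, count_cons_mean, mul_add, ENNReal.tsum_add, ih,
      ENNReal.tsum_mul_right, PMF.tsum_coe]
    push_cast
    ring

lemma mul_probEvent_lt_count_le [DecidableEq X] (p : PMF X) (a : X) (m : ℕ) (t : ℝ≥0∞) :
    t * probEvent (iid p m) {w | t < w.count a} ≤ m * p a := by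
  rw [probEvent_eq_tsum, ← tsum_iid_mul_count, ← ENNReal.tsum_mul_left]
  refine ENNReal.tsum_le_tsum fun w => ?_
  by_cases hw : w ∈ {w : Multiset X | t < w.count a}
  · rw [Set.indicator_of_mem hw, mul_comm]
    gcongr
    exact hw.le
  · simp [Set.indicator_of_notMem hw]

lemma summable_abs_toReal_sub (p q : PMF X) :
    Summable fun x => |(p x).toReal - (q x).toReal| :=
  ((ENNReal.summable_toReal p.tsum_coe_ne_top).sub
    (ENNReal.summable_toReal q.tsum_coe_ne_top)).abs

lemma sum_le_two_mul_tv (p q : PMF X) (s : Finset X) (hq : ∀ x ∈ s, q x = 0) :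
    ∑ x ∈ s, (p x).toReal ≤ 2 * tv p q := by
  calc ∑ x ∈ s, (p x).toReal = ∑ x ∈ s, |(p x).toReal - (q x).toReal| :=
        Finset.sum_congr rfl fun x hx => by simp [hq x hx]
    _ ≤ ∑' x, |(p x).toReal - (q x).toReal| :=
        (summable_abs_toReal_sub p q).sum_le_tsum _ fun _ _ => abs_nonneg _
    _ = 2 * tv p q := by rw [tv]; ring

lemma tv_triangle_left (p q r : PMF X) : tv p q ≤ tv r p + tv r q := by
  have hp := summable_abs_toReal_sub r p
  have hq := summable_abs_toReal_sub r q
  simp only [tv, ← add_div, ← hp.tsum_add hq]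
  gcongr ?_ / 2
  refine Summable.tsum_le_tsum (fun x => ?_) (summable_abs_toReal_sub p q) (hp.add hq)
  rw [abs_sub_comm (r x).toReal (p x).toReal]
  exact abs_sub_le _ _ _

lemma sum_le_two_mul_tv_map (ρ : PMF Ω) {f f' : Ω → X} (hf : f.Injective) (s : Finset Ω)
    (hs : ∀ a ∈ s, f a ∉ Set.range f') :
    ∑ a ∈ s, (ρ a).toReal ≤ 2 * tv (ρ.map f) (ρ.map f') := by
  classical
  have le_map (a : Ω) : ρ a ≤ ρ.map f (f a) := by
    rw [PMF.map_apply]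
    exact le_trans (by simp) (ENNReal.le_tsum a)
  have map_eq_zero : ∀ x ∈ s.image f, ρ.map f' x = 0 := by
    simp only [Finset.forall_mem_image, PMF.apply_eq_zero_iff, PMF.support_map, Set.mem_image]
    rintro a ha ⟨b, -, hb⟩
    exact hs a ha ⟨b, hb⟩
  calc ∑ a ∈ s, (ρ a).toReal ≤ ∑ a ∈ s, (ρ.map f (f a)).toReal := by
        gcongr
        · exact PMF.apply_ne_top _ _
        · exact le_map _
    _ = ∑ x ∈ s.image f, (ρ.map f x).toReal := by rw [Finset.sum_image hf.injOn]
    _ ≤ _ := sum_le_two_mul_tv _ _ _ map_eq_zero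

/-- For `w ∈ E` the bijection `φ w` sends every success `i` to a failure, so at most half of all `i`
are successes; average over `i`. -/
lemma exists_two_mul_probEvent_le [Finite ι] [Nonempty ι] (μ : PMF Ω) (E : Set Ω)
    (G : ι → Set Ω) (φ : Ω → ι → ι) (hφ : ∀ w, (φ w).Bijective)
    (hG : ∀ w ∈ E, ∀ i, w ∈ G i → w ∉ G (φ w i)) :
    ∃ i, 2 * probEvent μ (G i) ≤ 1 + probEvent μ Eᶜ := by
  cases nonempty_fintype ι
  have pair_le (w : Ω) (i : ι) :
      (G i).indicator μ w + (G (φ w i)).indicator μ w ≤ μ w + Eᶜ.indicator μ w := by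
    by_cases hw : w ∈ E
    · by_cases hi : w ∈ G i
      · simp [hi, hG w hw i hi]
      · simpa [hi] using (Set.indicator_le_self _ _ _).trans le_self_add
    · have hw' : w ∈ Eᶜ := hw
      rw [Set.indicator_of_mem hw']
      gcongr <;> exact Set.indicator_le_self _ _ _
  have sum_le : ∑ i, 2 * probEvent μ (G i) ≤ ∑ _i : ι, (1 + probEvent μ Eᶜ) := calc
      ∑ i, 2 * probEvent μ (G i) = ∑' w, ∑ i, 2 * (G i).indicator μ w := by
        simp only [probEvent_eq_tsum, ← ENNReal.tsum_mul_left]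
        rw [Summable.tsum_finsetSum fun _ _ => ENNReal.summable]
      _ = ∑' w, ∑ i, ((G i).indicator μ w + (G (φ w i)).indicator μ w) := by
        congr! 2 with w
        rw [Finset.sum_add_distrib, (hφ w).sum_comp fun i => (G i).indicator μ w,
          ← Finset.mul_sum, two_mul]
      _ ≤ ∑' w, ∑ _i : ι, (μ w + Eᶜ.indicator μ w) :=
        ENNReal.tsum_le_tsum fun w => Finset.sum_le_sum fun i _ => pair_le w i
      _ = ∑ _i : ι, (1 + probEvent μ Eᶜ) := by
        rw [Summable.tsum_finsetSum fun _ _ => ENNReal.summable]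
        simp only [ENNReal.tsum_add, PMF.tsum_coe, probEvent_eq_tsum]
  obtain ⟨i, -, hi⟩ := ENNReal.exists_le_of_sum_le Finset.univ_nonempty sum_le
  exact ⟨i, hi⟩

lemma exists_two_mul_probEvent_learner_le [Finite ι] [Nonempty ι] (ρ : PMF Ω)
    (label : ι → Ω → X) (m : ℕ) (v : Multiset X → Multiset X) (A : Multiset X → PMF X)
    (E : Set (Multiset Ω)) (φ : Multiset Ω → ι → ι) (hφ : ∀ w, (φ w).Bijective) {r : ℝ}
    (hv : ∀ w ∈ E, ∀ i, v (w.map (label i)) = v (w.map (label (φ w i))))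
    (hr : ∀ w ∈ E, ∀ i, 2 * r < tv (ρ.map (label i)) (ρ.map (label (φ w i)))) :
    ∃ i, 2 * probEvent ((iid (ρ.map (label i)) m).bind fun S => PMF.pure (v S))
        {T | tv (A T) (ρ.map (label i)) ≤ r} ≤
      1 + probEvent (iid ρ m) Eᶜ := by
  have event_eq (i : ι) : probEvent ((iid (ρ.map (label i)) m).bind fun S => PMF.pure (v S))
        {T | tv (A T) (ρ.map (label i)) ≤ r} =
      probEvent (iid ρ m) {w | tv (A (v (w.map (label i)))) (ρ.map (label i)) ≤ r} := by
    rw [iid_map, PMF.bind_map]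
    exact probEvent_map _ _ _
  simp only [event_eq]
  refine exists_two_mul_probEvent_le _ _ _ φ hφ fun w hw i hi hφi => ?_
  simp only [Set.mem_ofPred_eq, ← hv w hw i] at hi hφi
  linarith [hr w hw i, tv_triangle_left (ρ.map (label i)) (ρ.map (label (φ w i)))
    (A (v (w.map (label i))))]

end Distributions

section MultisetSelection

variable {X : Type*}

/-- A sub-multiset of `S` with `n` elements (all of `S` if it has fewer) that uses elements
satisfying `P` only after all the others: what a subtractive adversary removing `P` leaves. -/
noncomputable def keepAvoiding (P : X → Prop) [DecidablePred P] (n : ℕ) (S : Multiset X) :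
    Multiset X :=
  (((S.filter (¬ P ·)).toList ++ (S.filter P).toList).take n : List X)

/-- Exactly `n` elements, taken from `F` first and then padded with copies of `z`: the points
inserted by an additive adversary whose budget must be used up. -/
noncomputable def resize (n : ℕ) (z : X) (F : Multiset X) : Multiset X :=
  ((F.toList ++ List.replicate n z).take n : List X)

variable {P : X → Prop} [DecidablePred P] {n : ℕ} {S S' F : Multiset X} {z : X}

lemma keepAvoiding_le : keepAvoiding P n S ≤ S := by
  calc keepAvoiding P n S ≤ S.filter (¬ P ·) + S.filter P := by
        rw [← (S.filter (¬ P ·)).coe_toList, ← (S.filter P).coe_toList, Multiset.coe_add]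
        simpa only [keepAvoiding, Multiset.coe_toList] using
          Multiset.coe_le.2 (List.take_sublist n _).subperm
    _ = S := by rw [add_comm, Multiset.filter_add_not]

lemma card_keepAvoiding (h : n ≤ Multiset.card S) : Multiset.card (keepAvoiding P n S) = n := by
  have := congrArg Multiset.card (Multiset.filter_add_not P S)
  simp only [Multiset.card_add] at this
  simp only [keepAvoiding, Multiset.coe_card, List.length_take, List.length_append,
    Multiset.length_toList]
  omega

lemma keepAvoiding_congr (hn : n ≤ Multiset.card (S.filter (¬ P ·)))
    (h : S.filter (¬ P ·) = S'.filter (¬ P ·)) : keepAvoiding P n S = keepAvoiding P n S' := by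
  rw [keepAvoiding, keepAvoiding, ← h, List.take_append_of_le_length (by simpa using hn),
    List.take_append_of_le_length (by simpa using hn)]

lemma card_resize : Multiset.card (resize n z F) = n := by
  simp [resize]

lemma resize_of_card_le (h : Multiset.card F ≤ n) :
    resize n z F = F + Multiset.replicate (n - Multiset.card F) z := by
  simp [resize, List.take_append, List.take_of_length_le, h, ← Multiset.coe_add,
    Multiset.coe_replicate]

end MultisetSelection

section DeterministicAdversary

variable {X : Type*} {v : Multiset X → Multiset X} {η : ℝ}

lemma isAdditive_pure (hv : ∀ S, S ≤ v S) : IsAdditive fun S => PMF.pure (v S) := by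
  rintro S T hT
  obtain rfl : T = v S := by simpa using hT
  exact hv S

lemma isSubtractive_pure (hv : ∀ S, v S ≤ S) : IsSubtractive fun S => PMF.pure (v S) := by
  rintro S T hT
  obtain rfl : T = v S := by simpa using hT
  exact hv S

lemma fixedBudgetAdd_pure (hη : 0 ≤ η)
    (hv : ∀ S, Multiset.card (v S) = Multiset.card S + ⌊η * Multiset.card S⌋₊) :
    FixedBudgetAdd (fun S => PMF.pure (v S)) η := by
  refine ⟨fun m => m + ⌊η * m⌋₊, fun S T hT => ?_, fun m => ?_⟩
  · obtain rfl : T = v S := by simpa using hT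
    exact hv S
  · push_cast
    constructor
    · linarith [Nat.lt_floor_add_one (η * m)]
    · linarith [Nat.floor_le (a := η * m) (by positivity)]

lemma fixedBudgetSub_pure (hη : 0 ≤ η) (hη' : η ≤ 1)
    (hv : ∀ S, Multiset.card (v S) = Multiset.card S - ⌊η * Multiset.card S⌋₊) :
    FixedBudgetSub (fun S => PMF.pure (v S)) η := by
  refine ⟨fun m => m - ⌊η * m⌋₊, fun S T hT => ?_, fun m => ?_⟩
  · obtain rfl : T = v S := by simpa using hT
    exact hv S
  · have floor_le : ⌊η * m⌋₊ ≤ m :=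
      Nat.floor_le_of_le (mul_le_of_le_one_left m.cast_nonneg hη')
    rw [Nat.cast_sub floor_le]
    constructor
    · linarith [Nat.lt_floor_add_one (η * m)]
    · linarith [Nat.floor_le (a := η * m) (by positivity)]

end DeterministicAdversary

section Bits

lemma bit_eq_bit_iff {b b' : Bool} {n n' : ℕ} : Nat.bit b n = Nat.bit b' n' ↔ b = b' ∧ n = n' := by
  refine ⟨fun h => ?_, fun ⟨hb, hn⟩ => by rw [hb, hn]⟩
  exact ⟨by simpa using congrArg Nat.bodd h, by simpa [Nat.div2_bit] using congrArg Nat.div2 h⟩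

lemma bit_xor_one (b : Bool) (n : ℕ) : Nat.bit b n ^^^ 1 = Nat.bit (!b) n := by
  rw [show (1 : ℕ) = Nat.bit true 0 from rfl, Nat.xor_bit]
  simp

end Bits

section Draws

variable {N j k : ℕ}

/-- A symbolic draw from `p_{i,j,k}` with `|B_i| = N`: the atom `(0, 0)`, the atom `(i, 2j+2)` that
reveals `i`, or the `a`-th point of `B_i × {2j+1}`. It does not depend on the set `B_i`, which lets
one couple the samples of all these distributions. -/
inductive Draw (N : ℕ)
  | origin
  | index
  | point (a : Fin N)
  deriving DecidableEq

/-- `Draw N` as an iterated `Option`, used to transport finiteness and sums. -/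
def Draw.equivOption (N : ℕ) : Draw N ≃ Option (Option (Fin N)) where
  toFun
    | .origin => none
    | .index => some none
    | .point a => some (some a)
  invFun
    | none => .origin
    | some none => .index
    | some (some a) => .point a
  left_inv := by rintro (_ | _ | _) <;> rfl
  right_inv := by rintro (_ | _ | _) <;> rfl

instance : Fintype (Draw N) := .ofEquiv _ (Draw.equivOption N).symm

lemma Draw.sum_univ {M : Type*} [AddCommMonoid M] (f : Draw N → M) :
    ∑ d, f d = f .origin + ∑ a, f (.point a) + f .index := by
  rw [← (Draw.equivOption N).symm.sum_comp, Fintype.sum_option, Fintype.sum_option, add_assoc,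
    add_comm (∑ a, _)]
  rfl

/-- The probability of each symbolic draw under `p_{i,j,k}`, in `ℝ≥0∞` as in `IsPijk`. -/
noncomputable def drawWeight (N j k : ℕ) : Draw N → ℝ≥0∞
  | .origin => 1 - (j : ℝ≥0∞)⁻¹
  | .index => (k : ℝ≥0∞)⁻¹
  | .point _ => ((j : ℝ≥0∞)⁻¹ - (k : ℝ≥0∞)⁻¹) * (N : ℝ≥0∞)⁻¹

lemma sum_drawWeight (hN : 0 < N) (hj : 0 < j) (hjk : j ≤ k) :
    ∑ s, drawWeight N j k s = 1 := by
  have hk_inv : (k : ℝ≥0∞)⁻¹ ≤ (j : ℝ≥0∞)⁻¹ := by simpa using hjk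
  have hj_inv : (j : ℝ≥0∞)⁻¹ ≤ 1 := by simpa using Nat.one_le_iff_ne_zero.2 hj.ne'
  simp only [Draw.sum_univ, drawWeight, Finset.sum_const, Finset.card_univ, Fintype.card_fin,
    nsmul_eq_mul]
  rw [mul_left_comm, ENNReal.mul_inv_cancel (by simpa using hN.ne') (by simp), mul_one,
    add_assoc, tsub_add_cancel_of_le hk_inv, tsub_add_cancel_of_le hj_inv]

/-- The distribution of a symbolic draw. -/
noncomputable def drawPMF (hN : 0 < N) (hj : 0 < j) (hjk : j ≤ k) : PMF (Draw N) :=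
  PMF.ofFintype (drawWeight N j k) (sum_drawWeight hN hj hjk)

variable (hN : 0 < N) (hj : 0 < j) (hjk : j ≤ k)

lemma toReal_drawPMF_point (a : Fin N) :
    (drawPMF hN hj hjk (.point a)).toReal = (1 / j - 1 / k) / N := by
  have hk_inv : (k : ℝ≥0∞)⁻¹ ≤ (j : ℝ≥0∞)⁻¹ := by simpa using hjk
  simp only [drawPMF, PMF.ofFintype_apply, drawWeight, ENNReal.toReal_mul,
    ENNReal.toReal_sub_of_le hk_inv (by simpa using hj.ne'), ENNReal.toReal_inv,
    ENNReal.toReal_natCast]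
  ring

lemma probEvent_lt_count_index_le {m : ℕ} (hm : 0 < m) :
    probEvent (iid (drawPMF hN hj hjk) m) {w | ⌊(4 / k : ℝ) * m⌋₊ < w.count .index} ≤
      1 / 4 := by
  have hk : 0 < k := hj.trans_le hjk
  have hkR : (0 : ℝ) < k := by exact_mod_cast hk
  set t : ℝ≥0∞ := ENNReal.ofReal (4 / k * m)
  have ht : t * (1 / 4) = m * drawPMF hN hj hjk .index := by
    have h4 : (1 / 4 : ℝ≥0∞) = ENNReal.ofReal (1 / 4) := by
      rw [ENNReal.ofReal_div_of_pos (by norm_num)]; simp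
    simp only [drawPMF, PMF.ofFintype_apply, drawWeight, t, h4]
    rw [← ENNReal.ofReal_mul (by positivity), ← ENNReal.ofReal_natCast m,
      ← ENNReal.ofReal_natCast k, ← ENNReal.ofReal_inv_of_pos hkR,
      ← ENNReal.ofReal_mul (by positivity)]
    congr 1
    ring
  have floor_lt_iff : {w : Multiset (Draw N) | ⌊(4 / k : ℝ) * m⌋₊ < w.count .index} =
      {w | t < w.count .index} := by
    ext w
    simp only [Set.mem_ofPred_eq, t]
    rw [Nat.floor_lt (by positivity), ← ENNReal.ofReal_natCast,
      ENNReal.ofReal_lt_ofReal_iff_of_nonneg (by positivity)]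
  have ht0 : t ≠ 0 := (ENNReal.ofReal_pos.2 (by positivity)).ne'
  rw [floor_lt_iff, ← ENNReal.mul_le_mul_iff_right ht0 ENNReal.ofReal_ne_top, ht]
  exact mul_probEvent_lt_count_le _ _ _ _

/-- The bits that agree with `σ` at the points drawn in `w` and are opposite to it elsewhere. -/
def flipUnseen (w : Multiset (Draw N)) (σ : Fin N → Bool) (a : Fin N) : Bool :=
  if .point a ∈ w then σ a else !σ a

lemma flipUnseen_involutive (w : Multiset (Draw N)) : (flipUnseen w).Involutive := by
  intro σ
  funext a
  by_cases h : .point a ∈ w <;> simp [flipUnseen, h]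

/-- The set `{2a + σ a : a < N}` encoded by the bits `σ`. -/
def bitSet (σ : Fin N → Bool) : Finset ℕ :=
  Finset.univ.image fun a : Fin N => Nat.bit (σ a) a

lemma card_bitSet (σ : Fin N → Bool) : (bitSet σ).card = N := by
  rw [bitSet, Finset.card_image_of_injective _ fun a b h => Fin.ext (bit_eq_bit_iff.1 h).2,
    Finset.card_univ, Fintype.card_fin]

/-- The sample point that a symbolic draw stands for when `B_i` is `bitSet σ` and its index `i` is
given by `code`. -/
def label (code : Finset ℕ → ℕ) (j : ℕ) (σ : Fin N → Bool) : Draw N → ℕ × ℕ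
  | .origin => (0, 0)
  | .index => (code (bitSet σ), 2 * j + 2)
  | .point a => (Nat.bit (σ a) a, 2 * j + 1)

lemma label_injective (code : Finset ℕ → ℕ) (σ : Fin N → Bool) : (label code j σ).Injective := by
  rintro (_ | _ | a) (_ | _ | b) <;> simp [label, bit_eq_bit_iff, Fin.val_inj]

lemma isPijk_map_label {B : ℕ → Finset ℕ} {code : Finset ℕ → ℕ} (hcode : code.RightInverse B)
    (σ : Fin N → Bool) :
    IsPijk B (code (bitSet σ)) j k ((drawPMF hN hj hjk).map (label code j σ)) := by
  classical
  rintro ⟨y, l⟩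
  have sum_points (c : ℝ≥0∞) :
      ∑ a : Fin N, (if (y, l) = (Nat.bit (σ a) a, 2 * j + 1) then c else 0) =
        if y ∈ bitSet σ ∧ l = 2 * j + 1 then c else 0 := by
    have point_label_injective : Function.Injective fun a : Fin N =>
        (Nat.bit (σ a) a, 2 * j + 1) :=
      (label_injective (j := j) code σ).comp fun _ _ h => Draw.point.inj h
    rw [← Finset.sum_image (f := fun x => if (y, l) = x then c else 0) point_label_injective.injOn,
      Finset.sum_ite_eq]
    congr 1
    simp only [bitSet, Finset.mem_image, Finset.mem_univ, true_and, Prod.mk.injEq]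
    grind
  rw [PMF.map_apply, tsum_fintype, hcode, card_bitSet, Draw.sum_univ]
  simp only [label, drawPMF, PMF.ofFintype_apply, drawWeight, mul_ite, mul_one, mul_zero]
  refine congrArg₂ _ (congrArg₂ _ ?_ ?_) ?_
  · congr
  · exact (Finset.sum_congr rfl fun _ _ => by congr).trans (sum_points _)
  · congr

lemma le_two_mul_card_filter_point_notMem {w : Multiset (Draw N)}
    (hw : 2 * Multiset.card w ≤ N) :
    N ≤ 2 * (Finset.univ.filter fun a : Fin N => .point a ∉ w).card := by
  have seen_le : (Finset.univ.filter fun a : Fin N => .point a ∈ w).card ≤ Multiset.card w := calc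
      _ ≤ w.toFinset.card := Finset.card_le_card_of_injOn .point (by simp [Set.MapsTo])
        fun a _ b _ h => Draw.point.inj h
      _ ≤ Multiset.card w := w.toFinset_card_le
  have card_split :=
    Finset.card_filter_add_card_filter_not (s := Finset.univ) fun a : Fin N => .point a ∈ w
  rw [Finset.card_univ, Fintype.card_fin] at card_split
  omega

lemma inv_sub_inv_div_le_tv (code : Finset ℕ → ℕ) {w : Multiset (Draw N)}
    (hw : 2 * Multiset.card w ≤ N) (σ : Fin N → Bool) :
    (1 / j - 1 / k : ℝ) / 4 ≤ tv ((drawPMF hN hj hjk).map (label code j σ))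
      ((drawPMF hN hj hjk).map (label code j (flipUnseen w σ))) := by
  set unseen : Finset (Fin N) := {a | .point a ∉ w}
  have card_unseen : (N : ℝ) / 2 ≤ unseen.card := by
    rw [div_le_iff₀' two_pos]
    exact_mod_cast le_two_mul_card_filter_point_notMem hw
  have notMem_range : ∀ d ∈ unseen.image Draw.point,
      label code j σ d ∉ Set.range (label code j (flipUnseen w σ)) := by
    simp only [Finset.forall_mem_image, unseen, Finset.mem_filter, Finset.mem_univ, true_and]
    rintro a ha ⟨d, hd⟩
    cases d with
    | origin => simp [label] at hd
    | index => simp [label] at hd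
    | point b =>
      obtain ⟨hbit, hba⟩ := bit_eq_bit_iff.1 (Prod.mk.inj hd).1
      obtain rfl := Fin.ext hba
      simp [flipUnseen, ha] at hbit
  have mass_le := sum_le_two_mul_tv_map (drawPMF hN hj hjk) (label_injective code σ) _ notMem_range
  rw [Finset.sum_image fun a _ b _ h => Draw.point.inj h] at mass_le
  simp only [toReal_drawPMF_point, Finset.sum_const, nsmul_eq_mul] at mass_le
  have hNR : (0 : ℝ) < N := by exact_mod_cast hN
  have mass_nonneg : (0 : ℝ) ≤ (1 / j - 1 / k) / N :=
    div_nonneg (sub_nonneg.2 (one_div_le_one_div_of_le (mod_cast hj) (mod_cast hjk))) hNR.le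
  calc (1 / j - 1 / k : ℝ) / 4 = N / 2 * ((1 / j - 1 / k) / N) / 2 := by field_simp; norm_num
    _ ≤ unseen.card * ((1 / j - 1 / k) / N) / 2 := by gcongr
    _ ≤ _ := by linarith

end Draws

section Adversaries

variable {N j : ℕ} {B : ℕ → Finset ℕ} {code : Finset ℕ → ℕ} {w : Multiset (Draw N)}
  {σ : Fin N → Bool} {η : ℝ}

/-- The decoy for an index point `x = (i, 2j+2)`: the index point of the set obtained from `B_i` by
flipping the last bit of every element not seen in `S`. -/
def decoyIndex (B : ℕ → Finset ℕ) (code : Finset ℕ → ℕ) (j : ℕ)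
    (S : Multiset (ℕ × ℕ)) (x : ℕ × ℕ) : ℕ × ℕ :=
  (code ((B x.1).image fun y => if (y, 2 * j + 1) ∈ S then y else y ^^^ 1), 2 * j + 2)

/-- The additive adversary: add to `S` the decoy of each of its index points, then spend the rest of
the budget on copies of `(0, 0)`. -/
noncomputable def decoyAdversary (B : ℕ → Finset ℕ) (code : Finset ℕ → ℕ) (j : ℕ) (η : ℝ)
    (S : Multiset (ℕ × ℕ)) : Multiset (ℕ × ℕ) :=
  S + resize ⌊η * Multiset.card S⌋₊ (0, 0)
    ((S.filter (·.2 = 2 * j + 2)).map (decoyIndex B code j S))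

/-- The subtractive adversary: remove `⌊η |S|⌋` points of `S`, index points first. -/
noncomputable def hidingAdversary (j : ℕ) (η : ℝ) (S : Multiset (ℕ × ℕ)) : Multiset (ℕ × ℕ) :=
  keepAvoiding (·.2 = 2 * j + 2) (Multiset.card S - ⌊η * Multiset.card S⌋₊) S

lemma le_decoyAdversary (S : Multiset (ℕ × ℕ)) : S ≤ decoyAdversary B code j η S :=
  Multiset.le_add_right _ _

lemma card_decoyAdversary (S : Multiset (ℕ × ℕ)) :
    Multiset.card (decoyAdversary B code j η S) =
      Multiset.card S + ⌊η * Multiset.card S⌋₊ := by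
  rw [decoyAdversary, Multiset.card_add, card_resize]

lemma card_hidingAdversary (S : Multiset (ℕ × ℕ)) :
    Multiset.card (hidingAdversary j η S) = Multiset.card S - ⌊η * Multiset.card S⌋₊ :=
  card_keepAvoiding tsub_le_self

lemma bit_mem_map_label_iff {a : Fin N} :
    (Nat.bit (σ a) a, 2 * j + 1) ∈ w.map (label code j σ) ↔ .point a ∈ w :=
  Multiset.mem_map_of_injective (label_injective code σ) (a := .point a)

lemma decoyIndex_map_label (hcode : code.RightInverse B) :
    decoyIndex B code j (w.map (label code j σ)) (label code j σ .index) =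
      label code j (flipUnseen w σ) .index := by
  simp only [decoyIndex, label, hcode (bitSet σ)]
  congr 2
  simp only [bitSet, Finset.image_image]
  refine Finset.image_congr fun a _ => ?_
  simp only [Function.comp_apply, bit_mem_map_label_iff, flipUnseen, bit_xor_one]
  split_ifs <;> rfl

lemma filter_eq_index_map_label :
    (w.map (label code j σ)).filter (·.2 = 2 * j + 2) =
      Multiset.replicate (w.count .index) (label code j σ .index) := by
  rw [Multiset.filter_map, ← Multiset.map_replicate, ← Multiset.filter_eq']
  congr 2
  funext d
  cases d <;> simp [label]

lemma filter_ne_index_map_label_flipUnseen :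
    (w.map (label code j σ)).filter (¬ ·.2 = 2 * j + 2) =
      (w.map (label code j (flipUnseen w σ))).filter (¬ ·.2 = 2 * j + 2) := by
  simp only [Multiset.filter_map]
  have same_filter (τ : Fin N → Bool) :
      w.filter ((fun x : ℕ × ℕ => ¬ x.2 = 2 * j + 2) ∘ label code j τ) = w.filter (· ≠ .index) :=
    Multiset.filter_congr fun d _ => by cases d <;> simp [label]
  rw [same_filter, same_filter]
  refine Multiset.map_congr rfl fun d hd => ?_
  obtain ⟨hdw, hd⟩ := Multiset.mem_filter.1 hd
  rcases d with _ | _ | a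
  · rfl
  · exact absurd rfl hd
  · simp [label, flipUnseen, hdw]

lemma hidingAdversary_map_label_flipUnseen (h : w.count .index ≤ ⌊η * Multiset.card w⌋₊) :
    hidingAdversary j η (w.map (label code j σ)) =
      hidingAdversary j η (w.map (label code j (flipUnseen w σ))) := by
  have card_index := congrArg Multiset.card (filter_eq_index_map_label (code := code) (j := j)
    (w := w) (σ := σ))
  have card_split := congrArg Multiset.card
    (Multiset.filter_add_not (·.2 = 2 * j + 2) (w.map (label code j σ)))
  simp only [Multiset.card_add, Multiset.card_map, Multiset.card_replicate]
    at card_index card_split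
  rw [hidingAdversary, hidingAdversary, Multiset.card_map, Multiset.card_map]
  exact keepAvoiding_congr (by omega) filter_ne_index_map_label_flipUnseen

lemma decoyAdversary_map_label (hcode : code.RightInverse B)
    (h : w.count .index ≤ ⌊η * Multiset.card w⌋₊) :
    decoyAdversary B code j η (w.map (label code j σ)) =
      Multiset.replicate (w.count .index) (label code j σ .index) +
        (w.map (label code j σ)).filter (¬ ·.2 = 2 * j + 2) +
        (Multiset.replicate (w.count .index) (label code j (flipUnseen w σ) .index) +
        Multiset.replicate (⌊η * Multiset.card w⌋₊ - w.count .index) (0, 0)) := by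
  rw [decoyAdversary, Multiset.card_map, filter_eq_index_map_label, Multiset.map_replicate,
    decoyIndex_map_label hcode, resize_of_card_le (by rwa [Multiset.card_replicate]),
    Multiset.card_replicate, ← filter_eq_index_map_label (σ := σ), Multiset.filter_add_not]

lemma decoyAdversary_map_label_flipUnseen (hcode : code.RightInverse B)
    (h : w.count .index ≤ ⌊η * Multiset.card w⌋₊) :
    decoyAdversary B code j η (w.map (label code j σ)) =
      decoyAdversary B code j η (w.map (label code j (flipUnseen w σ))) := by
  rw [decoyAdversary_map_label hcode h, decoyAdversary_map_label hcode h,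
    flipUnseen_involutive w σ, filter_ne_index_map_label_flipUnseen (σ := σ)]
  abel

end Adversaries

section Universality

variable {B : ℕ → Finset ℕ} {code : Finset ℕ → ℕ} {g : ℕ → ℕ} {j : ℕ} {α : ℝ}

lemma map_label_mem_Cg (hcode : code.RightInverse B) {N : ℕ} (hN : 0 < N) (hj : 0 < j)
    (hjg : j < g j) (σ : Fin N → Bool) :
    (drawPMF hN hj hjg.le).map (label code j σ) ∈ Cg B g := by
  refine ⟨code (bitSet σ), j, hj, hjg, ?_, isPijk_map_label hN hj hjg.le hcode σ⟩
  rw [hcode, ← Finset.card_pos, card_bitSet]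
  exact hN

lemma exists_two_mul_probEvent_label_le {N k m : ℕ} (hN : 0 < N) (hj : 0 < j) (hjk : j ≤ k)
    (hm : 0 < m) (hmN : 2 * m ≤ N) {v : Multiset (ℕ × ℕ) → Multiset (ℕ × ℕ)}
    (hv : ∀ (w : Multiset (Draw N)) σ, w.count .index ≤ ⌊(4 / k : ℝ) * Multiset.card w⌋₊ →
        v (w.map (label code j σ)) = v (w.map (label code j (flipUnseen w σ))))
    {r : ℝ} (hr : 2 * r < (1 / j - 1 / k) / 4) (A : Multiset (ℕ × ℕ) → PMF (ℕ × ℕ)) :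
    ∃ σ : Fin N → Bool,
      2 * probEvent
        ((iid ((drawPMF hN hj hjk).map (label code j σ)) m).bind fun S => PMF.pure (v S))
        {T | tv (A T) ((drawPMF hN hj hjk).map (label code j σ)) ≤ r} ≤ 1 + 1 / 4 := by
  let few : Set (Multiset (Draw N)) :=
    {w | Multiset.card w = m ∧ w.count .index ≤ ⌊(4 / k : ℝ) * m⌋₊}
  have compl_few_le : probEvent (iid (drawPMF hN hj hjk) m) fewᶜ ≤ 1 / 4 := by
    refine le_trans (PMF.toOuterMeasure_mono _ ?_) (probEvent_lt_count_index_le hN hj hjk hm)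
    rintro w ⟨hw, hw'⟩
    by_contra hle
    exact hw ⟨card_eq_of_mem_support_iid hw', not_lt.1 hle⟩
  obtain ⟨σ, hσ⟩ := exists_two_mul_probEvent_learner_le (drawPMF hN hj hjk) (label code j) m v A
    few flipUnseen (fun w => (flipUnseen_involutive w).bijective)
    (fun w hw σ => hv w σ (by rw [hw.1]; exact hw.2))
    (fun w hw σ => hr.trans_le <| inv_sub_inv_div_le_tv hN hj hjk code (by rwa [hw.1]) σ)
  exact ⟨σ, hσ.trans (by gcongr)⟩

lemma universalAdversary_pure (hcode : code.RightInverse B) (hj : 0 < j) (hjg : j < g j)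
    (hαg : 2 * (α * (4 / g j) + 1 / g j) < (1 / j - 1 / g j : ℝ) / 4)
    {v : Multiset (ℕ × ℕ) → Multiset (ℕ × ℕ)}
    (hv : ∀ (N : ℕ) (w : Multiset (Draw N)) σ,
      w.count .index ≤ ⌊(4 / g j : ℝ) * Multiset.card w⌋₊ →
        v (w.map (label code j σ)) = v (w.map (label code j (flipUnseen w σ)))) :
    UniversalAdversary (Cg B g) α (fun S => PMF.pure (v S)) (4 / g j) := by
  rintro ⟨A, mc, hA⟩
  let m := max 1 (mc (1 / g j) (1 / 4))
  have hm : 0 < m := lt_max_of_lt_left one_pos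
  have hN : 0 < 2 * m := by omega
  have one_lt_g : (1 : ℝ) < g j := by exact_mod_cast lt_of_le_of_lt hj hjg
  obtain ⟨σ, hσ⟩ := exists_two_mul_probEvent_label_le hN hj hjg.le hm le_rfl (hv _) hαg A
  have success := hA _ (map_label_mem_Cg hcode hN hj hjg σ) (1 / g j) (1 / 4) (by positivity)
    ((div_lt_one (by positivity)).2 one_lt_g) (by norm_num) (by norm_num) m (le_max_right _ _)
  have three_halves_le := (mul_le_mul_right success 2).trans hσ
  rw [← ENNReal.ofReal_one, ← ENNReal.ofReal_sub _ (by norm_num), ← ENNReal.ofReal_ofNat 2,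
    ← ENNReal.ofReal_ofNat 4, ← ENNReal.ofReal_div_of_pos (by norm_num),
    ← ENNReal.ofReal_add (by norm_num) (by norm_num), ← ENNReal.ofReal_mul (by norm_num),
    ENNReal.ofReal_le_ofReal_iff (by norm_num)] at three_halves_le
  norm_num at three_halves_le

end Universality

theorem stmt9_general (B : ℕ → Finset ℕ) (hB : Function.Surjective B) (g : ℕ → ℕ)
    (hg : ¬ BddAbove (Set.range fun n => (g n : ℝ) / n)) (α : ℝ) :
    ∃ η : ℝ, 0 < η ∧ η < 1 ∧
      (∃ V, IsAdditive V ∧ FixedBudgetAdd V η ∧ UniversalAdversary (Cg B g) α V η) ∧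
      ∃ V, IsSubtractive V ∧ FixedBudgetSub V η ∧ UniversalAdversary (Cg B g) α V η := by
  obtain ⟨_, ⟨j, rfl⟩, hj_large⟩ := not_bddAbove_iff.1 hg (max (32 * α + 9) 4)
  obtain ⟨hα, h4⟩ := max_lt_iff.1 hj_large
  have hj : 0 < j := Nat.pos_of_ne_zero fun hj => by norm_num [hj] at h4
  have hjR : (0 : ℝ) < j := by exact_mod_cast hj
  rw [lt_div_iff₀ hjR] at hα h4
  have hjg : j < g j := by exact_mod_cast (by linarith : (j : ℝ) < g j)
  have hgR : (0 : ℝ) < g j := hjR.trans (by exact_mod_cast hjg)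
  have one_le_j : (1 : ℝ) ≤ j := by exact_mod_cast hj
  have budget_lt_one : (4 / g j : ℝ) < 1 := (div_lt_one hgR).2 (by linarith)
  have separated : 2 * (α * (4 / g j) + 1 / g j) < (1 / j - 1 / g j : ℝ) / 4 := by
    field_simp
    linarith
  have hcode := Function.rightInverse_surjInv hB
  refine ⟨4 / g j, by positivity, budget_lt_one,
    ⟨_, isAdditive_pure le_decoyAdversary,
      fixedBudgetAdd_pure (by positivity) card_decoyAdversary,
      universalAdversary_pure hcode hj hjg separated
        fun N w σ h => decoyAdversary_map_label_flipUnseen hcode h⟩,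
    ⟨_, isSubtractive_pure fun S => keepAvoiding_le,
      fixedBudgetSub_pure (by positivity) budget_lt_one.le card_hidingAdversary,
      universalAdversary_pure hcode hj hjg separated
        fun N w σ h => hidingAdversary_map_label_flipUnseen h⟩⟩

/-- For every `α ≥ 1` and every superlinear `g`, the class `C_g` is neither
adaptively additively nor adaptively subtractively α-robustly learnable. -/
theorem stmt9 (B : ℕ → Finset ℕ) (hB : Function.Surjective B)
    (g : ℕ → ℕ) (hg : Superlinear g) (α : ℝ) (hα : 1 ≤ α) :
    ¬ AdditivelyRobustlyLearnable (Cg B g) α ∧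
      ¬ SubtractivelyRobustlyLearnable (Cg B g) α := by
  obtain ⟨η, hη, hη', ⟨V, hV, hVη, hVu⟩, W, hW, hWη, hWu⟩ :=
    stmt9_general B hB g (Filter.not_bddAbove_of_tendsto_atTop hg) α
  exact ⟨fun ⟨A, mc, h⟩ => hVu ⟨A, mc, h V η hη hη' hV hVη⟩,
    fun ⟨A, mc, h⟩ => hWu ⟨A, mc, h W η hη hη' hW hWη⟩⟩
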